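/- Assume in addition that M(β*) ≤ s and that Assumption MC(s,α) holds with some α > 1, and set c = 3/2 + 16/(7(α−1)). Then with probability at least 1 − 2M^{1−q}, every Group Lasso solution β̂ satisfies ‖β̂ − β*‖_{2,∞} ≤ (c/φ)·λ_max. If, in addition, min_{j∈J(β*)} ‖(β*)^j‖ > (2c/φ)·λ_max, then with the same probability the thresholded index set Ĵ = { j : ‖β̂^j‖ > (c/φ)·λ_max } equals the true sparsity pattern J(β*). -/

import Mathlib

/-!
On the event that all noise correlations satisfy `‖(Xᵀ W)^j‖ / N ≤ λ_j / 2`, the bound on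
`Δ = b - βstar` is deterministic.

*The event.* `‖(Xᵀ W)^j‖²` is a Gaussian quadratic form. Rotating to an eigenbasis of
`X_j X_jᵀ` turns it into a weighted chi-square variable, and Chernoff's bound (`chisq_tail`,
`gauss_quad_tail`) shows that it exceeds `N² λ_j² / 4` with probability at most `M ^ (-q)`; a union
bound over the groups gives `noise_event`.

*Optimality.* Comparing the objective at `b` and `βstar` gives the basic inequality
`‖XΔ‖² / N + ∑ λ_j ‖Δ^j‖ ≤ 4 ∑_{j ∈ J} λ_j ‖Δ^j‖` (`basic_ineq`), hence a cone condition on `Δ`.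
The first-order conditions (`kkt`) give `‖(Xᵀ X Δ)^j‖ / N ≤ (3/2) λ_j`.

*Coherence.* The Gram form differs from `φ ⟨a, b⟩` by at most `2η (∑ ‖a^j‖) (∑ ‖b^j‖)`
with `η = λ_min φ / (14 α λ_max s)` (`Coherent.form`). On the cone this gives a restricted eigenvalue
`φ (1 - 1/α)`, which with the basic inequality bounds `∑ ‖Δ^j‖`. Testing the Gram form on one group
gives `φ ‖Δ^j‖ ≤ (3/2) λ_j + 2η ∑ ‖Δ^j‖ ≤ c λ_max` (`sup_norm_bound`). Pattern recovery is then the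
triangle inequality.
-/


open MeasureTheory ProbabilityTheory Finset

noncomputable section

namespace GroupLasso

/-- The index set `{1,…,K}` partitioned into `M` groups, the `j`-th of size `Kj j`. -/
abbrev GIdx {M : ℕ} (Kj : Fin M → ℕ) : Type := (j : Fin M) × Fin (Kj j)

/-- Euclidean norm `‖β^j‖` of the `j`-th group of coefficients. -/
def gnorm {M : ℕ} {Kj : Fin M → ℕ} (β : GIdx Kj → ℝ) (j : Fin M) : ℝ :=
  Real.sqrt (∑ t, (β ⟨j, t⟩) ^ 2)

/-- Trace of `Ψ_j = X_{G_j}ᵀ X_{G_j} / N`. -/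
def trPsi {N M : ℕ} {Kj : Fin M → ℕ} (X : Matrix (Fin N) (GIdx Kj) ℝ) (j : Fin M) : ℝ :=
  (∑ t, ∑ i, (X i ⟨j, t⟩) ^ 2) / N

/-- Spectral norm of the positive semidefinite matrix `Ψ_j = X_{G_j}ᵀ X_{G_j} / N`,
expressed as the supremum of its quadratic form over unit vectors supported on group `j`. -/
def specPsi {N M : ℕ} {Kj : Fin M → ℕ} (X : Matrix (Fin N) (GIdx Kj) ℝ) (j : Fin M) : ℝ :=
  sSup {x | ∃ v : GIdx Kj → ℝ, (∀ k : GIdx Kj, k.1 ≠ j → v k = 0) ∧ (∑ k, (v k) ^ 2 = 1) ∧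
    x = (∑ i, (∑ k, X i k * v k) ^ 2) / N}

/-- The Group Lasso objective `(1/N)‖Xβ − y‖² + 2 Σ_j λ_j ‖β^j‖`. -/
def glObj {N M : ℕ} {Kj : Fin M → ℕ} (X : Matrix (Fin N) (GIdx Kj) ℝ) (y : Fin N → ℝ)
    (lam : Fin M → ℝ) (β : GIdx Kj → ℝ) : ℝ :=
  (∑ i, (X.mulVec β i - y i) ^ 2) / N + 2 * ∑ j, lam j * gnorm β j

/-- `b` is a Group Lasso solution. -/
def IsGLSol {N M : ℕ} {Kj : Fin M → ℕ} (X : Matrix (Fin N) (GIdx Kj) ℝ) (y : Fin N → ℝ)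
    (lam : Fin M → ℝ) (b : GIdx Kj → ℝ) : Prop :=
  ∀ β : GIdx Kj → ℝ, glObj X y lam b ≤ glObj X y lam β

/-- Entry `(t,t')` of the cross Gram matrix `Ψ[j,j'] = X_{G_j}ᵀ X_{G_{j'}} / N`. -/
def psiEnt {N M : ℕ} {Kj : Fin M → ℕ} (X : Matrix (Fin N) (GIdx Kj) ℝ) (j j' : Fin M)
    (t : Fin (Kj j)) (t' : Fin (Kj j')) : ℝ :=
  (∑ i, X i ⟨j, t⟩ * X i ⟨j', t'⟩) / N

/-- The constant `c = 3/2 + 16/(7(α−1))`. -/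
def mcConst (α : ℝ) : ℝ := 3 / 2 + 16 / (7 * (α - 1))

/-! ### Gaussian quadratic forms -/

/-- Moment generating function of a squared standard Gaussian: the exact value is
`(1 - 2r)^(-1/2)`, and the bound is the sub-gamma estimate `-log (1 - y) ≤ y + y² / (2 (1 - y))`. -/
lemma mgf_sq_gaussian {r : ℝ} (hr1 : r < 1 / 2) (hr0 : 0 ≤ r) :
    Integrable (fun x : ℝ => Real.exp (r * x ^ 2)) (gaussianReal 0 1) ∧
      ∫ x, Real.exp (r * x ^ 2) ∂(gaussianReal 0 1) ≤ Real.exp (r + r ^ 2 / (1 - 2 * r)) := by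
  have hpos : 0 < 1 - 2 * r := by linarith
  have key : ∀ x : ℝ, gaussianPDFReal 0 1 x * Real.exp (r * x ^ 2) =
      (√(2 * Real.pi))⁻¹ * Real.exp (-(1 / 2 - r) * x ^ 2) := by
    intro x
    rw [gaussianPDFReal_def]
    simp only [NNReal.coe_one, mul_one, sub_zero]
    rw [mul_assoc, ← Real.exp_add]
    congr 2
    ring
  have hint : Integrable (fun x : ℝ => Real.exp (r * x ^ 2)) (gaussianReal 0 1) := by
    rw [gaussianReal_of_var_ne_zero _ one_ne_zero,
      integrable_withDensity_iff_integrable_smul₀' (measurable_gaussianPDF _ _).aemeasurable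
        (ae_of_all _ fun _ => gaussianPDF_lt_top)]
    simp only [toReal_gaussianPDF, smul_eq_mul, key]
    exact (integrable_exp_neg_mul_sq (by linarith)).const_mul _
  refine ⟨hint, ?_⟩
  rw [integral_gaussianReal_eq_integral_smul one_ne_zero]
  simp only [smul_eq_mul, key]
  rw [integral_const_mul, integral_gaussian]
  have hval : (√(2 * Real.pi))⁻¹ * √(Real.pi / (1 / 2 - r)) = √((1 - 2 * r)⁻¹) := by
    rw [← Real.sqrt_inv, ← Real.sqrt_mul (by positivity)]
    congr 1
    have : (1 / 2 - r) = (1 - 2 * r) / 2 := by ring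
    rw [this]
    field_simp
  rw [hval]
  have hz : 1 ≤ (1 - 2 * r)⁻¹ := (one_le_inv₀ hpos).2 (by linarith)
  -- With `z = 1 / (1 - 2r)`, the estimate is `log z ≤ sinh (log z) = (z - 1 / z) / 2`.
  have hlog := Real.self_le_sinh_iff.2 (Real.log_nonneg hz)
  rw [Real.sinh_log (by positivity), inv_inv] at hlog
  rw [← Real.exp_log (show 0 < √((1 - 2 * r)⁻¹) by positivity), Real.log_sqrt (by positivity)]
  apply Real.exp_le_exp.2
  have : ((1 - 2 * r)⁻¹ - (1 - 2 * r)) / 4 = r + r ^ 2 / (1 - 2 * r) := by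
    field_simp
    ring
  linarith

/-- Chernoff bound for a weighted chi-square variable with weights in `[0, 1]`. The exponent
`u = √x / (√K + 2√x)` is the minimiser of the sub-gamma bound with variance proxy `K`. -/
lemma chisq_tail {ι : Type*} [Fintype ι] (c : ι → ℝ) (hc0 : ∀ i, 0 ≤ c i) (hc1 : ∀ i, c i ≤ 1)
    {K : ℝ} (hK : 0 < K) (hsum : ∑ i, c i ≤ K) {x : ℝ} (hx : 0 ≤ x) :
    (Measure.pi fun _ : ι => gaussianReal 0 1).real
      {z | ∑ i, c i + 2 * (√(K * x) + x) ≤ ∑ i, c i * z i ^ 2} ≤ Real.exp (-x) := by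
  set k := √K with hk
  set y := √x with hy
  have hkpos : 0 < k := Real.sqrt_pos.2 hK
  have hy0 : 0 ≤ y := Real.sqrt_nonneg _
  have hk2 : k ^ 2 = K := Real.sq_sqrt hK.le
  have hy2 : y ^ 2 = x := Real.sq_sqrt hx
  set u := y / (k + 2 * y) with hu
  have hden : 0 < k + 2 * y := by positivity
  have hu0 : 0 ≤ u := by positivity
  have hu1 : u < 1 / 2 := by
    rw [hu, div_lt_iff₀ hden]; linarith
  have huc1 : ∀ i, u * c i < 1 / 2 := fun i =>
    lt_of_le_of_lt (mul_le_of_le_one_right hu0 (hc1 i)) hu1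
  have huc0 : ∀ i, 0 ≤ u * c i := fun i => mul_nonneg hu0 (hc0 i)
  have hexp : ∀ z : ι → ℝ, Real.exp (u * ∑ i, c i * z i ^ 2) =
      ∏ i, Real.exp (u * c i * z i ^ 2) := by
    intro z
    rw [← Real.exp_sum, Finset.mul_sum]
    congr 1
    exact Finset.sum_congr rfl fun i _ => by ring
  have hint : Integrable (fun z : ι → ℝ => Real.exp (u * ∑ i, c i * z i ^ 2))
      (Measure.pi fun _ : ι => gaussianReal 0 1) := by
    simp only [hexp]
    exact Integrable.fintype_prod (f := fun i (x : ℝ) => Real.exp (u * c i * x ^ 2))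
      fun i => (mgf_sq_gaussian (huc1 i) (huc0 i)).1
  refine (measure_ge_le_exp_mul_mgf _ hu0 hint).trans ?_
  have hmgf : mgf (fun z : ι → ℝ => ∑ i, c i * z i ^ 2)
      (Measure.pi fun _ : ι => gaussianReal 0 1) u ≤
      Real.exp (u * ∑ i, c i + u ^ 2 * K / (1 - 2 * u)) := by
    unfold mgf
    simp only [hexp]
    rw [integral_fintype_prod_eq_prod (f := fun i (x : ℝ) => Real.exp (u * c i * x ^ 2))]
    refine (Finset.prod_le_prod (fun i _ => integral_nonneg fun _ => (Real.exp_pos _).le)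
      fun i _ => (mgf_sq_gaussian (huc1 i) (huc0 i)).2).trans ?_
    rw [← Real.exp_sum]
    apply Real.exp_le_exp.2
    rw [Finset.sum_add_distrib, ← Finset.mul_sum]
    gcongr
    calc ∑ i, (u * c i) ^ 2 / (1 - 2 * (u * c i))
        ≤ ∑ i, u ^ 2 / (1 - 2 * u) * c i := by
          refine Finset.sum_le_sum fun i _ => ?_
          have h1 : 0 < 1 - 2 * u := by linarith
          have h2 : 1 - 2 * u ≤ 1 - 2 * (u * c i) := by
            have := mul_le_of_le_one_right hu0 (hc1 i); linarith
          have h3 : (u * c i) ^ 2 ≤ u ^ 2 * c i := by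
            have := mul_le_of_le_one_right (hc0 i) (hc1 i)
            nlinarith [sq_nonneg u]
          calc (u * c i) ^ 2 / (1 - 2 * (u * c i)) ≤ u ^ 2 * c i / (1 - 2 * u) := by
                gcongr
                exact mul_nonneg (sq_nonneg _) (hc0 i)
            _ = _ := by ring
      _ = u ^ 2 / (1 - 2 * u) * ∑ i, c i := by rw [Finset.mul_sum]
      _ ≤ u ^ 2 / (1 - 2 * u) * K := by
          have h1 : 0 < 1 - 2 * u := by linarith
          gcongr
      _ = _ := by ring
  refine (mul_le_mul_of_nonneg_left hmgf (Real.exp_pos _).le).trans ?_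
  rw [← Real.exp_add]
  apply Real.exp_le_exp.2
  rw [Real.sqrt_mul hK.le, ← hk, ← hy, ← hk2, ← hy2]
  have h1 : 1 - 2 * u = k / (k + 2 * y) := by
    rw [hu]; field_simp; ring
  have h2 : u ^ 2 * k ^ 2 / (1 - 2 * u) = u * y * k := by
    rw [h1, hu]; field_simp
  have h3 : u * (k + 2 * y) = y := by rw [hu]; field_simp
  rw [h2]
  apply le_of_eq
  linear_combination (-y) * h3

/-- Tail bound for the quadratic form `‖Bᵀ w‖²` of a standard Gaussian vector `w`. Rotation
invariance of the Gaussian law, applied to an eigenbasis of `B Bᵀ`, turns the form into a weighted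
chi-square variable whose weights are at most `S` and sum to `tr (B Bᵀ)`. -/
lemma gauss_quad_tail {ι κ : Type*} [Fintype ι] [Fintype κ] [Nonempty κ]
    (B : Matrix ι κ ℝ) {S : ℝ} (hS : 0 < S)
    (hspec : ∀ v : κ → ℝ, ∑ i, (∑ t, B i t * v t) ^ 2 ≤ S * ∑ t, v t ^ 2)
    {x : ℝ} (hx : 0 ≤ x) :
    (Measure.pi fun _ : ι => gaussianReal 0 1).real
      {w | ∑ t, ∑ i, B i t ^ 2 + 2 * S * (√(Fintype.card κ * x) + x) ≤
        ∑ t, (∑ i, B i t * w i) ^ 2} ≤ Real.exp (-x) := by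
  classical
  set A : Matrix ι ι ℝ := B * B.transpose with hAdef
  have hps : A.PosSemidef := by
    simpa [hAdef, Matrix.conjTranspose_eq_transpose_of_trivial] using
      Matrix.posSemidef_self_mul_conjTranspose B
  have hA := hps.isHermitian
  set a := hA.eigenvalues
  set e := hA.eigenvectorBasis
  have hquad : ∀ w w' : ι → ℝ, ∑ t, (∑ i, B i t * w i) * (∑ i, B i t * w' i) =
      w ⬝ᵥ A.mulVec w' := by
    intro w w'
    have : w ⬝ᵥ A.mulVec w' = (Matrix.vecMul w B) ⬝ᵥ (Matrix.vecMul w' B) := by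
      rw [hAdef, ← Matrix.mulVec_mulVec, Matrix.dotProduct_mulVec, Matrix.mulVec_transpose]
    rw [this]
    simp only [dotProduct, Matrix.vecMul, mul_comm]
  have horth : ∀ i i', (e i : ι → ℝ) ⬝ᵥ (e i' : ι → ℝ) = if i = i' then 1 else 0 := by
    intro i i'
    have h := e.orthonormal
    rw [orthonormal_iff_ite] at h
    rw [← h i i', EuclideanSpace.inner_eq_star_dotProduct]
    simp [dotProduct_comm]
  have heig : ∀ i, A.mulVec (e i) = a i • (e i : ι → ℝ) := fun i => hA.mulVec_eigenvectorBasis i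
  have ha0 : ∀ i, 0 ≤ a i := fun i => hps.eigenvalues_nonneg i
  have htr : ∑ i, a i = ∑ t, ∑ i, B i t ^ 2 := by
    have h := hA.trace_eq_sum_eigenvalues
    simp only [RCLike.ofReal_real_eq_id, id] at h
    rw [← h, Matrix.trace, Finset.sum_comm]
    refine Finset.sum_congr rfl fun i _ => ?_
    simp [hAdef, Matrix.mul_apply, sq]
  have haS : ∀ i, a i ≤ S := by
    intro i
    have h := hspec fun t => ∑ i', B i' t * e i i'
    have h1 : ∀ i', ∑ t, B i' t * ∑ i'', B i'' t * e i i'' = a i * e i i' := by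
      intro i'
      have := congrFun (heig i) i'
      simp only [Pi.smul_apply, smul_eq_mul] at this
      rw [← this]
      simp only [hAdef, Matrix.mulVec, dotProduct, Matrix.mul_apply, Matrix.transpose_apply,
        Finset.mul_sum, Finset.sum_mul]
      rw [Finset.sum_comm]
      simp only [mul_assoc]
    have h2 : ∑ t, (∑ i', B i' t * e i i') ^ 2 = a i := by
      simp only [sq]
      rw [hquad, heig, dotProduct_smul, horth]
      simp
    have h3 : ∑ i', (a i * e i i') ^ 2 = a i ^ 2 := by
      have := horth i i
      simp only [dotProduct, if_true] at this
      simp only [mul_pow, ← Finset.mul_sum]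
      simp only [sq] at this ⊢
      rw [this, mul_one]
    simp only [h1, h2, h3] at h
    rcases (ha0 i).eq_or_lt with h0 | h0
    · rw [← h0]; exact hS.le
    · nlinarith
  have hK : (0 : ℝ) < Fintype.card κ := by exact_mod_cast Fintype.card_pos
  have htrle : ∑ t, ∑ i, B i t ^ 2 ≤ S * Fintype.card κ := by
    have : ∀ t, ∑ i, B i t ^ 2 ≤ S := by
      intro t
      have h := hspec (Pi.single t 1)
      simpa [Pi.single_apply, ite_pow] using h
    calc ∑ t, ∑ i, B i t ^ 2 ≤ ∑ _t : κ, S := Finset.sum_le_sum fun t _ => this t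
      _ = _ := by simp [mul_comm]
  have hform : ∀ z : ι → ℝ, ∑ t, (∑ i, B i t * (∑ i', z i' • e i') i) ^ 2 =
      ∑ i, a i * z i ^ 2 := by
    intro z
    simp only [sq]
    rw [hquad]
    have h1 : ((∑ i', z i' • e i' : EuclideanSpace ℝ ι) : ι → ℝ) =
        ∑ i', z i' • (e i' : ι → ℝ) := by
      ext; simp
    rw [h1, Matrix.mulVec_sum, sum_dotProduct]
    refine Finset.sum_congr rfl fun i _ => ?_
    rw [dotProduct_sum]
    simp only [Matrix.mulVec_smul, heig, smul_dotProduct, dotProduct_smul, horth, smul_eq_mul]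
    simp
    ring
  have hmeas : MeasurableSet {w : EuclideanSpace ℝ ι |
      ∑ t, ∑ i, B i t ^ 2 + 2 * S * (√(Fintype.card κ * x) + x) ≤
        ∑ t, (∑ i, B i t * w i) ^ 2} :=
    measurableSet_le (by fun_prop) (by fun_prop)
  have hlaw := (map_pi_eq_stdGaussian (ι := ι)).trans (stdGaussian_eq_map_pi_orthonormalBasis e)
  have h4 := congrArg (fun ν => Measure.real ν {w : EuclideanSpace ℝ ι |
      ∑ t, ∑ i, B i t ^ 2 + 2 * S * (√(Fintype.card κ * x) + x) ≤
        ∑ t, (∑ i, B i t * w i) ^ 2}) hlaw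
  simp only at h4
  rw [map_measureReal_apply (by fun_prop) hmeas, map_measureReal_apply (by fun_prop) hmeas] at h4
  simp only [Set.preimage_ofPred_eq] at h4
  rw [h4]
  simp only [hform]
  have h5 := chisq_tail (fun i => a i / S) (fun i => div_nonneg (ha0 i) hS.le)
    (fun i => (div_le_one hS).2 (haS i)) hK
    (by rw [← Finset.sum_div, div_le_iff₀ hS, htr, mul_comm]; exact htrle) hx
  refine le_trans (le_of_eq ?_) h5
  congr 1
  ext z
  simp only [Set.mem_ofPred_eq]
  rw [← htr, ← Finset.sum_div]
  have h6 : ∑ i, a i / S * z i ^ 2 = (∑ i, a i * z i ^ 2) / S := by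
    rw [Finset.sum_div]; exact Finset.sum_congr rfl fun i _ => by ring
  rw [h6, le_div_iff₀ hS, add_mul, div_mul_cancel₀ _ hS.ne']
  rw [show 2 * (√(Fintype.card κ * x) + x) * S = 2 * S * (√(Fintype.card κ * x) + x) by ring]

section Aux

variable {N M : ℕ} {Kj : Fin M → ℕ}

/-! ### The noise event -/

/-- The vector supported on group `j` whose `j`-th block is `v`. -/
def extend (j : Fin M) (v : Fin (Kj j) → ℝ) : GIdx Kj → ℝ :=
  fun k => if h : k.1 = j then v (h ▸ k.2) else 0

@[simp] lemma extend_same (j : Fin M) (v : Fin (Kj j) → ℝ) (t : Fin (Kj j)) :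
    extend j v ⟨j, t⟩ = v t := by simp [extend]

lemma extend_ne {j : Fin M} (v : Fin (Kj j) → ℝ) {k : GIdx Kj} (h : k.1 ≠ j) :
    extend j v k = 0 := by simp [extend, h]

lemma sum_group {j : Fin M} {f : GIdx Kj → ℝ} (h : ∀ k : GIdx Kj, k.1 ≠ j → f k = 0) :
    ∑ k, f k = ∑ t, f ⟨j, t⟩ := by
  rw [Fintype.sum_sigma]
  refine Finset.sum_eq_single j (fun j' _ hj' => ?_) (by simp)
  exact Finset.sum_eq_zero fun t _ => h ⟨j', t⟩ hj'

/-- The supremum defining `specPsi` is over a set bounded above (Cauchy-Schwarz), so it does bound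
the quadratic form of `Ψ_j`, here scaled by `N` and homogenised. -/
lemma quad_le_specPsi (hN : 1 ≤ N) (X : Matrix (Fin N) (GIdx Kj) ℝ) (j : Fin M)
    (v : Fin (Kj j) → ℝ) :
    ∑ i, (∑ t, X i ⟨j, t⟩ * v t) ^ 2 ≤ N * specPsi X j * ∑ t, v t ^ 2 := by
  have hNpos : (0 : ℝ) < N := by exact_mod_cast hN
  set n := ∑ t, v t ^ 2 with hn
  have hn0 : 0 ≤ n := Finset.sum_nonneg fun t _ => sq_nonneg _
  rcases hn0.eq_or_lt with h0 | hpos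
  · have hv : ∀ t, v t = 0 := fun t => by
      have := (Finset.sum_eq_zero_iff_of_nonneg fun t _ => sq_nonneg (v t)).1 h0.symm t
        (Finset.mem_univ _)
      exact pow_eq_zero_iff two_ne_zero |>.1 this
    simp [hv, ← h0]
  have hsq : √n ^ 2 = n := Real.sq_sqrt hn0
  have hb : BddAbove {x | ∃ v : GIdx Kj → ℝ, (∀ k : GIdx Kj, k.1 ≠ j → v k = 0) ∧
      (∑ k, (v k) ^ 2 = 1) ∧ x = (∑ i, (∑ k, X i k * v k) ^ 2) / N} := by
    refine ⟨(∑ i, ∑ k, X i k ^ 2) / N, ?_⟩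
    rintro _ ⟨v, _, hv, rfl⟩
    gcongr with i
    simpa [hv] using Finset.sum_mul_sq_le_sq_mul_sq Finset.univ (fun k => X i k) v
  have hmem : (∑ i, (∑ t, X i ⟨j, t⟩ * (v t / √n)) ^ 2) / N ≤ specPsi X j := by
    refine le_csSup hb ⟨extend j fun t => v t / √n, fun k hk => extend_ne _ hk, ?_, ?_⟩
    · rw [sum_group (j := j) fun k hk => by simp [extend_ne _ hk]]
      simp only [extend_same, div_pow, hsq]
      rw [← Finset.sum_div, ← hn, div_self hpos.ne']
    · congr 1
      refine Finset.sum_congr rfl fun i _ => ?_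
      rw [sum_group (j := j) fun k hk => by simp [extend_ne _ hk]]
      simp
  have heq : ∑ i, (∑ t, X i ⟨j, t⟩ * (v t / √n)) ^ 2 =
      (∑ i, (∑ t, X i ⟨j, t⟩ * v t) ^ 2) / n := by
    rw [Finset.sum_div]
    refine Finset.sum_congr rfl fun i _ => ?_
    simp only [← mul_div_assoc]
    rw [← Finset.sum_div, div_pow, hsq]
  rw [heq, div_le_iff₀ hNpos, div_le_iff₀ hpos] at hmem
  linarith

/-- A single group's noise correlation exceeds `λ_j / 2` with probability at most `M ^ (-q)`:
the tail bound at level `x = q log M`. -/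
lemma noise_tail (hM : 2 ≤ M) (hN : 1 ≤ N) (X : Matrix (Fin N) (GIdx Kj) ℝ) {σ : ℝ} (hσ : 0 < σ)
    {q : ℝ} (hq : 1 < q) (j : Fin M) (hKj : 1 ≤ Kj j) (hspec : 0 < specPsi X j) {l : ℝ}
    (hl : 2 * σ / √N * √(trPsi X j + 2 * specPsi X j *
        (2 * q * Real.log M + √(Kj j * q * Real.log M))) ≤ l) :
    (Measure.pi fun _ : Fin N => gaussianReal 0 (σ ^ 2).toNNReal).real
      {w | l / 2 < √(∑ t, (∑ i, X i ⟨j, t⟩ * w i) ^ 2) / N} ≤ (M : ℝ) ^ (-q) := by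
  have hNpos : (0 : ℝ) < N := by exact_mod_cast hN
  have hMpos : (0 : ℝ) < M := by exact_mod_cast (by omega : 0 < M)
  have hlog : 0 ≤ Real.log M := Real.log_nonneg (by exact_mod_cast (by omega : 1 ≤ M))
  have hx : 0 ≤ q * Real.log M := mul_nonneg (by linarith) hlog
  have : Nonempty (Fin (Kj j)) := ⟨⟨0, hKj⟩⟩
  have hscale : (Measure.pi fun _ : Fin N => gaussianReal 0 (σ ^ 2).toNNReal) =
      (Measure.pi fun _ : Fin N => gaussianReal 0 1).map (fun z i => σ * z i) := by
    have h := Measure.pi_map_pi (μ := fun _ : Fin N => gaussianReal 0 1)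
      (f := fun _ (x : ℝ) => σ * x) (fun _ => by fun_prop)
    rw [h]
    congr 1
    ext1 i
    rw [gaussianReal_map_const_mul]
    congr 1
    · simp
    · ext; simp [Real.coe_toNNReal _ (sq_nonneg σ)]
  have hms : MeasurableSet {w : Fin N → ℝ | l / 2 < √(∑ t, (∑ i, X i ⟨j, t⟩ * w i) ^ 2) / N} :=
    measurableSet_lt (by fun_prop) (by fun_prop)
  rw [hscale, map_measureReal_apply (by fun_prop) hms]
  have htail := gauss_quad_tail (fun i t => X i ⟨j, t⟩ : Matrix (Fin N) (Fin (Kj j)) ℝ)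
    (mul_pos hNpos hspec) (fun v => quad_le_specPsi hN X j v) hx
  have hexp : Real.exp (-(q * Real.log M)) = (M : ℝ) ^ (-q) := by
    rw [Real.rpow_def_of_pos hMpos]; congr 1; ring
  rw [hexp] at htail
  refine (measureReal_mono ?_).trans htail
  intro z hz
  simp only [Set.preimage_ofPred_eq, Set.mem_ofPred_eq, Fintype.card_fin] at hz ⊢
  set Q := ∑ t, (∑ i, X i ⟨j, t⟩ * z i) ^ 2 with hQ
  have hQ0 : 0 ≤ Q := Finset.sum_nonneg fun _ _ => sq_nonneg _
  have h1 : ∑ t, (∑ i, X i ⟨j, t⟩ * (σ * z i)) ^ 2 = σ ^ 2 * Q := by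
    rw [hQ, Finset.mul_sum]
    refine Finset.sum_congr rfl fun t _ => ?_
    rw [← mul_pow, Finset.mul_sum]
    congr 1
    exact Finset.sum_congr rfl fun i _ => by ring
  rw [h1, Real.sqrt_mul (sq_nonneg _), Real.sqrt_sq hσ.le] at hz
  set R := trPsi X j + 2 * specPsi X j * (2 * q * Real.log M + √(Kj j * q * Real.log M)) with hR
  have htr : ∑ t, ∑ i, X i ⟨j, t⟩ ^ 2 = N * trPsi X j := by
    rw [trPsi]; field_simp
  have hR0 : 0 ≤ trPsi X j := by
    rw [trPsi]; positivity
  have hsN : √(N : ℝ) ^ 2 = N := Real.sq_sqrt hNpos.le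
  have hsN0 : 0 < √(N : ℝ) := Real.sqrt_pos.2 hNpos
  have h2 : √N * √R < √Q := by
    have h3 : σ / √N * √R < σ * √Q / N := by
      refine lt_of_le_of_lt ?_ hz
      have : 2 * σ / √N * √R = 2 * (σ / √N * √R) := by ring
      linarith
    rw [lt_div_iff₀ hNpos] at h3
    have h4 : σ / √N * √R * N = σ * (√N * √R) := by
      nth_rewrite 2 [← hsN]
      field_simp
    rw [h4] at h3
    exact lt_of_mul_lt_mul_left h3 hσ.le
  rw [← Real.sqrt_mul hNpos.le] at h2
  have h5 : N * R < Q := (Real.sqrt_lt_sqrt_iff_of_pos (by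
    by_contra h; rw [Real.sqrt_eq_zero_of_nonpos (not_lt.1 h)] at h2
    exact absurd h2 (not_lt.2 (Real.sqrt_nonneg _)))).1 h2
  rw [htr]
  refine le_trans ?_ h5.le
  rw [hR, ← mul_assoc (Kj j : ℝ)]
  nlinarith [mul_nonneg (mul_nonneg hNpos.le hspec.le) hx]

/-- On an event of probability at least `1 - 2 M ^ (1 - q)`, every group's noise correlation
`‖(Xᵀ W)^j‖ / N` is at most `λ_j / 2`. The union bound over the `M` groups already gives
`1 - M ^ (1 - q)`. Since `W` is only a.e. measurable, the event is a measurable subset of full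
measure of the preimage under `W`. -/
lemma noise_event (hM : 2 ≤ M) (hN : 1 ≤ N) (hKj : ∀ j, 1 ≤ Kj j)
    (X : Matrix (Fin N) (GIdx Kj) ℝ)
    {Ω : Type*} [MeasurableSpace Ω] (μ : Measure Ω) [IsProbabilityMeasure μ]
    (W : Ω → Fin N → ℝ) {σ : ℝ} (hσ : 0 < σ)
    (hW : Measure.map W μ = Measure.pi fun _ : Fin N => gaussianReal 0 (σ ^ 2).toNNReal)
    {q : ℝ} (hq : 1 < q) (lam : Fin M → ℝ)
    (hspec : ∀ j, 0 < specPsi X j)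
    (hlam : ∀ j, 2 * σ / √N * √(trPsi X j + 2 * specPsi X j *
        (2 * q * Real.log M + √(Kj j * q * Real.log M))) ≤ lam j) :
    ∃ A : Set Ω, MeasurableSet A ∧ 1 - 2 * (M : ℝ) ^ ((1 : ℝ) - q) ≤ (μ A).toReal ∧
      ∀ ω ∈ A, ∀ j, √(∑ t, (∑ i, X i ⟨j, t⟩ * W ω i) ^ 2) / N ≤ lam j / 2 := by
  have hMpos : (0 : ℝ) < M := by exact_mod_cast (by omega : 0 < M)
  -- A map that is not a.e. measurable pushes `μ` forward to `0`, which is not a probability law.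
  have hWm : AEMeasurable W μ := by
    by_contra h
    rw [Measure.map_of_not_aemeasurable h] at hW
    have := congrArg (fun ν => ν Set.univ) hW
    simp at this
  set T : Set (Fin N → ℝ) :=
    {w | ∃ j, lam j / 2 < √(∑ t, (∑ i, X i ⟨j, t⟩ * w i) ^ 2) / N} with hT
  have hTU : T = ⋃ j, {w | lam j / 2 < √(∑ t, (∑ i, X i ⟨j, t⟩ * w i) ^ 2) / N} := by
    ext w; simp [hT]
  have hTm : MeasurableSet T := by
    rw [hTU]
    exact MeasurableSet.iUnion fun j => measurableSet_lt (by fun_prop) (by fun_prop)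
  have hTle : (Measure.map W μ).real T ≤ (M : ℝ) ^ ((1 : ℝ) - q) := by
    rw [hW, hTU]
    refine (measureReal_iUnion_fintype_le _).trans ?_
    refine (Finset.sum_le_sum fun j _ =>
      noise_tail hM hN X hσ hq j (hKj j) (hspec j) (hlam j)).trans (le_of_eq ?_)
    rw [Finset.sum_const, Finset.card_univ, Fintype.card_fin, nsmul_eq_mul, sub_eq_add_neg,
      Real.rpow_add hMpos, Real.rpow_one]
  have hnull : NullMeasurableSet (W ⁻¹' Tᶜ) μ := hWm.nullMeasurable hTm.compl
  obtain ⟨A, hAsub, hAm, hAeq⟩ := hnull.exists_measurable_subset_ae_eq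
  refine ⟨A, hAm, ?_, fun ω hω j => ?_⟩
  · rw [measure_congr hAeq, ← Measure.map_apply_of_aemeasurable hWm hTm.compl]
    have : IsProbabilityMeasure (Measure.map W μ) := Measure.isProbabilityMeasure_map hWm
    have h := probReal_compl_eq_one_sub (μ := Measure.map W μ) hTm
    have h0 : 0 ≤ (M : ℝ) ^ ((1 : ℝ) - q) := by positivity
    change _ ≤ (Measure.map W μ).real Tᶜ
    rw [h]
    linarith
  · have := hAsub hω
    simp only [hT, Set.mem_preimage, Set.mem_compl_iff, Set.mem_ofPred_eq, not_exists,
      not_lt] at this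
    exact this j

/-! ### Group norms and optimality conditions -/

lemma gnorm_nonneg (a : GIdx Kj → ℝ) (j : Fin M) : 0 ≤ gnorm a j := Real.sqrt_nonneg _

lemma gnorm_sq (a : GIdx Kj → ℝ) (j : Fin M) : gnorm a j ^ 2 = ∑ t, a ⟨j, t⟩ ^ 2 :=
  Real.sq_sqrt (Finset.sum_nonneg fun _ _ => sq_nonneg _)

lemma gnorm_eq_norm (a : GIdx Kj → ℝ) (j : Fin M) :
    gnorm a j = ‖(WithLp.toLp 2 fun t => a ⟨j, t⟩ : EuclideanSpace ℝ (Fin (Kj j)))‖ := by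
  simp [gnorm, EuclideanSpace.norm_eq]

lemma gnorm_add_le (a b : GIdx Kj → ℝ) (j : Fin M) :
    gnorm (a + b) j ≤ gnorm a j + gnorm b j := by
  simp only [gnorm_eq_norm]
  exact norm_add_le (WithLp.toLp 2 fun t => a ⟨j, t⟩ : EuclideanSpace ℝ (Fin (Kj j)))
    (WithLp.toLp 2 fun t => b ⟨j, t⟩)

lemma gnorm_smul (c : ℝ) (a : GIdx Kj → ℝ) (j : Fin M) :
    gnorm (c • a) j = |c| * gnorm a j := by
  simp only [gnorm, Pi.smul_apply, smul_eq_mul, mul_pow, ← Finset.mul_sum]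
  rw [Real.sqrt_mul (sq_nonneg c), Real.sqrt_sq_eq_abs]

lemma gnorm_neg (a : GIdx Kj → ℝ) (j : Fin M) : gnorm (-a) j = gnorm a j := by
  simp [gnorm]

lemma gnorm_congr {a b : GIdx Kj → ℝ} {j : Fin M} (h : ∀ t, a ⟨j, t⟩ = b ⟨j, t⟩) :
    gnorm a j = gnorm b j := by
  simp [gnorm, h]

lemma abs_group_inner_le (a b : GIdx Kj → ℝ) (j : Fin M) :
    |∑ t, a ⟨j, t⟩ * b ⟨j, t⟩| ≤ gnorm a j * gnorm b j := by
  rw [← abs_of_nonneg (mul_nonneg (gnorm_nonneg a j) (gnorm_nonneg b j))]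
  apply sq_le_sq.1
  rw [mul_pow, gnorm_sq, gnorm_sq]
  exact Finset.sum_mul_sq_le_sq_mul_sq _ _ _

/-- The restriction of `a` to the groups in `S`, extended by zero. -/
def restr (S : Finset (Fin M)) (a : GIdx Kj → ℝ) : GIdx Kj → ℝ :=
  fun k => if k.1 ∈ S then a k else 0

lemma gnorm_restr (S : Finset (Fin M)) (a : GIdx Kj → ℝ) (j : Fin M) :
    gnorm (restr S a) j = if j ∈ S then gnorm a j else 0 := by
  by_cases h : j ∈ S <;> simp [gnorm, restr, h]

lemma sum_gnorm_restr (S : Finset (Fin M)) (a : GIdx Kj → ℝ) :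
    ∑ j, gnorm (restr S a) j = ∑ j ∈ S, gnorm a j := by
  simp [gnorm_restr, Finset.sum_ite_mem]

lemma restr_add_compl (S : Finset (Fin M)) (a : GIdx Kj → ℝ) :
    restr S a + restr Sᶜ a = a := by
  ext k
  by_cases h : k.1 ∈ S <;> simp [restr, h]

/-- The vector `Xᵀ r / N` of empirical correlations of the columns of `X` with `r`. -/
def corr (X : Matrix (Fin N) (GIdx Kj) ℝ) (r : Fin N → ℝ) : GIdx Kj → ℝ :=
  fun k => (∑ i, X i k * r i) / N

lemma gnorm_corr (X : Matrix (Fin N) (GIdx Kj) ℝ) (r : Fin N → ℝ) (j : Fin M) :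
    gnorm (corr X r) j = √(∑ t, (∑ i, X i ⟨j, t⟩ * r i) ^ 2) / N := by
  simp only [gnorm, corr, div_pow]
  rw [← Finset.sum_div, Real.sqrt_div' _ (by positivity), Real.sqrt_sq (Nat.cast_nonneg _)]

lemma sum_mul_mulVec (X : Matrix (Fin N) (GIdx Kj) ℝ) (r : Fin N → ℝ) (d : GIdx Kj → ℝ) :
    (∑ i, r i * X.mulVec d i) / N = ∑ k, d k * corr X r k := by
  simp only [corr, Matrix.mulVec, dotProduct, Finset.mul_sum, ← mul_div_assoc]
  rw [← Finset.sum_div, Finset.sum_comm]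
  congr 1
  exact Finset.sum_congr rfl fun k _ => Finset.sum_congr rfl fun i _ => by ring

lemma sum_groups_abs_le (a b : GIdx Kj → ℝ) :
    ∑ k, a k * b k ≤ ∑ j, gnorm a j * gnorm b j := by
  rw [Fintype.sum_sigma]
  exact Finset.sum_le_sum fun j _ => (le_abs_self _).trans (abs_group_inner_le a b j)

lemma corr_add (X : Matrix (Fin N) (GIdx Kj) ℝ) (r r' : Fin N → ℝ) :
    corr X (r + r') = corr X r + corr X r' := by
  ext k
  simp [corr, mul_add, Finset.sum_add_distrib, add_div]

/-- Exact second-order expansion of the quadratic loss around `b` in the direction `d`. -/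
lemma sq_residual_add (X : Matrix (Fin N) (GIdx Kj) ℝ) (y : Fin N → ℝ) (b d : GIdx Kj → ℝ) :
    (∑ i, (X.mulVec (b + d) i - y i) ^ 2) / N =
      (∑ i, (X.mulVec b i - y i) ^ 2) / N +
      2 * ∑ k, d k * corr X (X.mulVec b - y) k + (∑ i, X.mulVec d i ^ 2) / N := by
  rw [← sum_mul_mulVec, ← mul_div_assoc, ← add_div, ← add_div, Finset.mul_sum,
    ← Finset.sum_add_distrib, ← Finset.sum_add_distrib, Matrix.mulVec_add]
  congr 1
  refine Finset.sum_congr rfl fun i _ => ?_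
  simp only [Pi.add_apply, Pi.sub_apply]
  ring

/-- First-order optimality: the correlation of the residual with group `j` has norm at most
`λ_j`. It follows by moving `b` along `-(Xᵀ r)^j` and letting the step size tend to zero. -/
lemma kkt {X : Matrix (Fin N) (GIdx Kj) ℝ} {y : Fin N → ℝ} {lam : Fin M → ℝ}
    (hlam : ∀ j, 0 < lam j) {b : GIdx Kj → ℝ} (hb : IsGLSol X y lam b) (j : Fin M) :
    gnorm (corr X (X.mulVec b - y)) j ≤ lam j := by
  set g := corr X (X.mulVec b - y) with hg
  set G := gnorm g j with hG
  have hG0 : 0 ≤ G := gnorm_nonneg _ _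
  set d := restr {j} g with hd
  set C := (∑ i, X.mulVec d i ^ 2) / N with hC
  have hC0 : 0 ≤ C := by positivity
  have hdg : ∑ k, d k * g k = G ^ 2 := by
    rw [gnorm_sq, Fintype.sum_sigma]
    rw [Finset.sum_eq_single j]
    · simp [hd, restr, sq]
    · intro j' _ hj'
      simp [hd, restr, hj']
    · simp
  have hstep : ∀ ε : ℝ, 0 < ε → 0 ≤ ε * (-(2 * G ^ 2) + 2 * lam j * G + ε * C) := by
    intro ε hε
    have h := hb (b + (-ε) • d)
    unfold glObj at h
    rw [sq_residual_add, ← hg] at h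
    have h1 : ∑ k, ((-ε) • d) k * g k = -ε * G ^ 2 := by
      rw [← hdg, Finset.mul_sum]
      exact Finset.sum_congr rfl fun k _ => by simp; ring
    have h2 : (∑ i, X.mulVec ((-ε) • d) i ^ 2) / N = ε ^ 2 * C := by
      rw [Matrix.mulVec_smul, hC, ← mul_div_assoc, Finset.mul_sum]
      congr 1
      exact Finset.sum_congr rfl fun i _ => by simp; ring
    have h3 : ∑ j', lam j' * gnorm (b + (-ε) • d) j' ≤
        ∑ j', lam j' * gnorm b j' + lam j * (ε * G) := by
      have h4 : ∀ j', lam j' * gnorm (b + (-ε) • d) j' ≤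
          lam j' * gnorm b j' + if j' = j then lam j * (ε * G) else 0 := by
        intro j'
        have h5 := gnorm_add_le b ((-ε) • d) j'
        rw [gnorm_smul, abs_neg, abs_of_pos hε, hd, gnorm_restr] at h5
        have h6 := mul_le_mul_of_nonneg_left h5 (hlam j').le
        by_cases hj : j' = j
        · subst hj
          simp only [Finset.mem_singleton, if_true] at h6 ⊢
          linarith
        · simp only [Finset.mem_singleton, hj, if_false, mul_zero, add_zero] at h6 ⊢
          exact h6
      refine (Finset.sum_le_sum fun j' _ => h4 j').trans (le_of_eq ?_)
      rw [Finset.sum_add_distrib]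
      simp
    rw [h1, h2] at h
    nlinarith
  by_contra! hlt
  have hGpos : 0 < G := (hlam j).trans hlt
  have hδ : 0 < G * (G - lam j) := mul_pos hGpos (sub_pos.2 hlt)
  have h := hstep (G * (G - lam j) / (C + 1)) (by positivity)
  have h1 : G * (G - lam j) / (C + 1) * C ≤ G * (G - lam j) := by
    rw [div_mul_eq_mul_div, div_le_iff₀ (by positivity)]
    nlinarith
  have h2 := nonneg_of_mul_nonneg_right h (by positivity)
  nlinarith

/-- The basic inequality obtained by comparing the objective at `b` and at `βstar`, when the noise
correlations are at most `λ_j / 2`. -/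
lemma basic_ineq {X : Matrix (Fin N) (GIdx Kj) ℝ} {βstar : GIdx Kj → ℝ} {w : Fin N → ℝ}
    {lam : Fin M → ℝ} (hlam : ∀ j, 0 < lam j) (hw : ∀ j, gnorm (corr X w) j ≤ lam j / 2)
    {b : GIdx Kj → ℝ} (hb : IsGLSol X (fun i => X.mulVec βstar i + w i) lam b) :
    (∑ i, X.mulVec (b - βstar) i ^ 2) / N + ∑ j, lam j * gnorm (b - βstar) j ≤
      4 * ∑ j ∈ Finset.univ.filter (fun j => gnorm βstar j ≠ 0),
        lam j * gnorm (b - βstar) j := by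
  set Δ := b - βstar with hΔ
  have hbΔ : b = βstar + Δ := by rw [hΔ]; abel
  have h := hb βstar
  unfold glObj at h
  nth_rewrite 1 [hbΔ] at h
  rw [sq_residual_add] at h
  have hres : X.mulVec βstar - (fun i => X.mulVec βstar i + w i) = -w := by
    ext i; simp
  have hcn : corr X (-w) = -corr X w := by
    ext k; simp [corr, neg_div]
  rw [hres, hcn] at h
  have h1 : -∑ j, lam j / 2 * gnorm Δ j ≤ ∑ k, Δ k * (-corr X w) k := by
    have h2 := sum_groups_abs_le Δ (corr X w)
    have h3 : ∑ k, Δ k * (-corr X w) k = -∑ k, Δ k * corr X w k := by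
      simp
    rw [h3]
    apply neg_le_neg
    refine h2.trans (Finset.sum_le_sum fun j _ => ?_)
    rw [mul_comm]
    exact mul_le_mul_of_nonneg_right (hw j) (gnorm_nonneg _ _)
  have h4 : ∑ j, lam j / 2 * gnorm Δ j = (∑ j, lam j * gnorm Δ j) / 2 := by
    rw [Finset.sum_div]; exact Finset.sum_congr rfl fun j _ => by ring
  rw [h4] at h1
  have h5 : ∑ j, lam j * gnorm Δ j + ∑ j, lam j * gnorm βstar j - ∑ j, lam j * gnorm b j ≤
      2 * ∑ j ∈ Finset.univ.filter (fun j => gnorm βstar j ≠ 0), lam j * gnorm Δ j := by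
    rw [← Finset.sum_add_distrib, ← Finset.sum_sub_distrib, Finset.mul_sum, Finset.sum_filter]
    refine Finset.sum_le_sum fun j _ => ?_
    by_cases hj : gnorm βstar j = 0
    · have : gnorm Δ j ≤ gnorm b j := by
        have := gnorm_add_le b (-βstar) j
        rw [gnorm_neg, hj, ← sub_eq_add_neg] at this
        linarith
      simp only [hj, ne_eq, not_true, if_false]
      nlinarith [hlam j]
    · have : gnorm βstar j ≤ gnorm b j + gnorm Δ j := by
        have := gnorm_add_le b (-Δ) j
        rw [gnorm_neg] at this
        refine le_trans (le_of_eq ?_) this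
        congr 1
        rw [hΔ]; abel
      simp only [ne_eq, hj, not_false_eq_true, if_true]
      nlinarith [hlam j]
  linarith

/-! ### Mutual coherence -/

lemma sum_abs_le_sqrt_card {n : ℕ} (u : Fin n → ℝ) : ∑ t, |u t| ≤ √n * √(∑ t, u t ^ 2) := by
  rw [← Real.sqrt_mul (Nat.cast_nonneg _)]
  apply Real.le_sqrt_of_sq_le
  have := sq_sum_le_card_mul_sum_sq (s := Finset.univ) (f := fun t => |u t|)
  simpa using this

/-- A matrix with entries bounded by `c` acts as a bilinear form of norm at most `c √(m n)`. -/
lemma bilin_le_of_entries {m n : ℕ} (P : Fin m → Fin n → ℝ) {c : ℝ} (hc : 0 ≤ c)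
    (hP : ∀ t t', |P t t'| ≤ c) (u : Fin m → ℝ) (v : Fin n → ℝ) :
    |∑ t, ∑ t', P t t' * u t * v t'| ≤
      c * √(m * n) * (√(∑ t, u t ^ 2) * √(∑ t, v t ^ 2)) := by
  calc |∑ t, ∑ t', P t t' * u t * v t'| ≤ ∑ t, ∑ t', c * (|u t| * |v t'|) := by
        refine (Finset.abs_sum_le_sum_abs _ _).trans (Finset.sum_le_sum fun t _ => ?_)
        refine (Finset.abs_sum_le_sum_abs _ _).trans (Finset.sum_le_sum fun t' _ => ?_)
        rw [abs_mul, abs_mul, mul_assoc]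
        exact mul_le_mul_of_nonneg_right (hP t t') (by positivity)
    _ = c * ((∑ t, |u t|) * ∑ t', |v t'|) := by
        rw [Finset.sum_mul_sum, Finset.mul_sum]
        exact Finset.sum_congr rfl fun t _ => by rw [Finset.mul_sum]
    _ ≤ c * ((√m * √(∑ t, u t ^ 2)) * (√n * √(∑ t, v t ^ 2))) := by
        gcongr
        · exact sum_abs_le_sqrt_card u
        · exact sum_abs_le_sqrt_card v
    _ = _ := by rw [Real.sqrt_mul (Nat.cast_nonneg _)]; ring

/-- A (rectangular) diagonal matrix with entries bounded by `c` acts as a bilinear form of norm at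
most `c`. -/
lemma bilin_le_of_diag {m n : ℕ} (P : Fin m → Fin n → ℝ) {c : ℝ} (hc : 0 ≤ c)
    (hP : ∀ t t', |P t t'| ≤ if (t : ℕ) = t' then c else 0) (u : Fin m → ℝ) (v : Fin n → ℝ) :
    |∑ t, ∑ t', P t t' * u t * v t'| ≤ c * (√(∑ t, u t ^ 2) * √(∑ t, v t ^ 2)) := by
  have h0 : ∀ t t', |P t t' * u t * v t'| ≤
      c * ((if (t : ℕ) = t' then |u t| else 0) * (if (t : ℕ) = t' then |v t'| else 0)) := by
    intro t t'
    rw [abs_mul, abs_mul, mul_assoc]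
    refine (mul_le_mul_of_nonneg_right (hP t t') (by positivity)).trans (le_of_eq ?_)
    split_ifs <;> simp
  have h1 : ∑ p : Fin m × Fin n, (if (p.1 : ℕ) = p.2 then |u p.1| else 0) ^ 2 ≤
      ∑ t, u t ^ 2 := by
    rw [Fintype.sum_prod_type]
    refine Finset.sum_le_sum fun t _ => ?_
    simp only [ite_pow, sq_abs, ne_eq, OfNat.ofNat_ne_zero, not_false_eq_true, zero_pow]
    rw [← Finset.sum_filter, Finset.sum_const, nsmul_eq_mul]
    refine mul_le_of_le_one_left (sq_nonneg _) ?_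
    exact_mod_cast Finset.card_le_one.2 fun a ha b hb => by
      simp only [Finset.mem_filter, Finset.mem_univ, true_and] at ha hb
      exact Fin.ext (ha.symm.trans hb)
  have h2 : ∑ p : Fin m × Fin n, (if (p.1 : ℕ) = p.2 then |v p.2| else 0) ^ 2 ≤
      ∑ t, v t ^ 2 := by
    rw [Fintype.sum_prod_type_right]
    refine Finset.sum_le_sum fun t _ => ?_
    simp only [ite_pow, sq_abs, ne_eq, OfNat.ofNat_ne_zero, not_false_eq_true, zero_pow]
    rw [← Finset.sum_filter, Finset.sum_const, nsmul_eq_mul]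
    refine mul_le_of_le_one_left (sq_nonneg _) ?_
    exact_mod_cast Finset.card_le_one.2 fun a ha b hb => by
      simp only [Finset.mem_filter, Finset.mem_univ, true_and] at ha hb
      exact Fin.ext (ha.trans hb.symm)
  calc |∑ t, ∑ t', P t t' * u t * v t'|
      ≤ ∑ t : Fin m, ∑ t' : Fin n, c * ((if (t : ℕ) = t' then |u t| else 0) *
          (if (t : ℕ) = t' then |v t'| else 0)) := by
        refine (Finset.abs_sum_le_sum_abs _ _).trans (Finset.sum_le_sum fun t _ => ?_)
        exact (Finset.abs_sum_le_sum_abs _ _).trans (Finset.sum_le_sum fun t' _ => h0 t t')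
    _ = c * ∑ p : Fin m × Fin n, (if (p.1 : ℕ) = p.2 then |u p.1| else 0) *
          (if (p.1 : ℕ) = p.2 then |v p.2| else 0) := by
        rw [Fintype.sum_prod_type, Finset.mul_sum]
        exact Finset.sum_congr rfl fun t _ => by rw [Finset.mul_sum]
    _ ≤ c * (√(∑ t, u t ^ 2) * √(∑ t, v t ^ 2)) := by
        refine mul_le_mul_of_nonneg_left ?_ hc
        refine (Real.sum_mul_le_sqrt_mul_sqrt _ _ _).trans ?_
        gcongr

/-- Assumption MC with the common factor `λ_min φ / (14 α λ_max s)` abstracted as `η`. Positions in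
groups of different sizes are compared as natural numbers. -/
structure Coherent (X : Matrix (Fin N) (GIdx Kj) ℝ) (φ η : ℝ) : Prop where
  diag : ∀ j t, psiEnt X j j t t = φ
  off : ∀ j, ∀ t t' : Fin (Kj j), (t : ℕ) ≠ (t' : ℕ) → |psiEnt X j j t t'| ≤ η / Kj j
  diag' : ∀ j j', j ≠ j' → ∀ (t : Fin (Kj j)) (t' : Fin (Kj j')), (t : ℕ) = (t' : ℕ) →
    |psiEnt X j j' t t'| ≤ η
  off' : ∀ j j', j ≠ j' → ∀ (t : Fin (Kj j)) (t' : Fin (Kj j')), (t : ℕ) ≠ (t' : ℕ) →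
    |psiEnt X j j' t t'| ≤ η / √(Kj j * Kj j')

/-- Each block `Ψ[j,j']` differs from `φ I` (if `j = j'`) or from `0` (if `j ≠ j'`) by a bilinear
form of norm at most `2η`. -/
lemma Coherent.block {X : Matrix (Fin N) (GIdx Kj) ℝ} {φ η : ℝ} (h : Coherent X φ η) (hη : 0 ≤ η)
    (hKj : ∀ j, 1 ≤ Kj j) (a b : GIdx Kj → ℝ) (j j' : Fin M) :
    |∑ t, ∑ t', psiEnt X j j' t t' * a ⟨j, t⟩ * b ⟨j', t'⟩ -
      (if j = j' then φ * ∑ t, a ⟨j, t⟩ * b ⟨j, t⟩ else 0)| ≤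
        2 * η * (gnorm a j * gnorm b j') := by
  have hK : ∀ j, (0 : ℝ) < Kj j := fun j => by exact_mod_cast hKj j
  have hgg : 0 ≤ gnorm a j * gnorm b j' := mul_nonneg (gnorm_nonneg _ _) (gnorm_nonneg _ _)
  by_cases hj : j = j'
  · subst hj
    have h1 := bilin_le_of_entries (fun t t' : Fin (Kj j) => if t = t' then 0 else
      psiEnt X j j t t') (c := η / Kj j) (div_nonneg hη (hK j).le)
      (fun t t' => by
        by_cases ht : t = t'
        · simp only [ht, if_true, abs_zero]; exact div_nonneg hη (hK j).le
        · simp only [ht, if_false]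
          exact h.off j t t' fun h => ht (Fin.ext h)) (fun t => a ⟨j, t⟩) (fun t => b ⟨j, t⟩)
    rw [Real.sqrt_mul_self (hK j).le, div_mul_cancel₀ _ (hK j).ne'] at h1
    change _ ≤ η * (gnorm a j * gnorm b j) at h1
    have h2 : ∑ t, ∑ t', psiEnt X j j t t' * a ⟨j, t⟩ * b ⟨j, t'⟩ -
        (if j = j then φ * ∑ t, a ⟨j, t⟩ * b ⟨j, t⟩ else 0) =
        ∑ t, ∑ t', (if t = t' then 0 else psiEnt X j j t t') * a ⟨j, t⟩ * b ⟨j, t'⟩ := by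
      rw [if_pos rfl, Finset.mul_sum, ← Finset.sum_sub_distrib]
      refine Finset.sum_congr rfl fun t _ => ?_
      rw [sub_eq_iff_eq_add, ← h.diag j t, ← mul_assoc]
      have h3 : psiEnt X j j t t * a ⟨j, t⟩ * b ⟨j, t⟩ =
          ∑ t', if t = t' then psiEnt X j j t t' * a ⟨j, t⟩ * b ⟨j, t'⟩ else 0 := by simp
      rw [h3, ← Finset.sum_add_distrib]
      refine Finset.sum_congr rfl fun t' _ => ?_
      split_ifs <;> simp
    rw [h2]
    nlinarith [mul_nonneg hη hgg]
  · rw [if_neg hj, sub_zero]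
    have hs : 0 < √((Kj j : ℝ) * Kj j') := Real.sqrt_pos.2 (mul_pos (hK j) (hK j'))
    have h1 := bilin_le_of_entries (fun (t : Fin (Kj j)) (t' : Fin (Kj j')) =>
      if (t : ℕ) = t' then 0 else psiEnt X j j' t t') (c := η / √(Kj j * Kj j'))
      (div_nonneg hη hs.le)
      (fun t t' => by
        by_cases ht : (t : ℕ) = t'
        · simp only [ht, if_true, abs_zero]; exact div_nonneg hη hs.le
        · simp only [ht, if_false]
          exact h.off' j j' hj t t' ht) (fun t => a ⟨j, t⟩) (fun t => b ⟨j', t⟩)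
    rw [div_mul_cancel₀ _ hs.ne'] at h1
    change _ ≤ η * (gnorm a j * gnorm b j') at h1
    have h2 := bilin_le_of_diag (fun (t : Fin (Kj j)) (t' : Fin (Kj j')) =>
      if (t : ℕ) = t' then psiEnt X j j' t t' else 0) (c := η) hη
      (fun t t' => by
        by_cases ht : (t : ℕ) = t'
        · simp only [ht, if_true]; exact h.diag' j j' hj t t' ht
        · simp [ht]) (fun t => a ⟨j, t⟩) (fun t => b ⟨j', t⟩)
    change _ ≤ η * (gnorm a j * gnorm b j') at h2
    have h3 : ∑ t, ∑ t', psiEnt X j j' t t' * a ⟨j, t⟩ * b ⟨j', t'⟩ =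
        ∑ t : Fin (Kj j), ∑ t' : Fin (Kj j'), (if (t : ℕ) = (t' : ℕ) then 0 else psiEnt X j j' t t') *
          a ⟨j, t⟩ * b ⟨j', t'⟩ +
        ∑ t : Fin (Kj j), ∑ t' : Fin (Kj j'), (if (t : ℕ) = (t' : ℕ) then psiEnt X j j' t t' else 0) *
          a ⟨j, t⟩ * b ⟨j', t'⟩ := by
      rw [← Finset.sum_add_distrib]
      refine Finset.sum_congr rfl fun t _ => ?_
      rw [← Finset.sum_add_distrib]
      refine Finset.sum_congr rfl fun t' _ => ?_
      split_ifs <;> simp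
    rw [h3]
    refine (abs_add_le _ _).trans ?_
    linarith

/-- Under coherence the Gram form `⟨Xa, Xb⟩ / N` is close to `φ ⟨a, b⟩`, with an error controlled
by the `ℓ¹`-type norms `∑ ‖a^j‖` and `∑ ‖b^j‖`. It is applied below to
restrictions of a single vector to sets of groups. -/
lemma Coherent.form {X : Matrix (Fin N) (GIdx Kj) ℝ} {φ η : ℝ} (h : Coherent X φ η) (hη : 0 ≤ η)
    (hKj : ∀ j, 1 ≤ Kj j) (a b : GIdx Kj → ℝ) :
    |(∑ i, X.mulVec a i * X.mulVec b i) / N - φ * ∑ k, a k * b k| ≤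
      2 * η * ((∑ j, gnorm a j) * ∑ j, gnorm b j) := by
  have h1 : (∑ i, X.mulVec a i * X.mulVec b i) / N =
      ∑ j, ∑ j', ∑ t, ∑ t', psiEnt X j j' t t' * a ⟨j, t⟩ * b ⟨j', t'⟩ := by
    have e1 : ∀ i, X.mulVec a i * X.mulVec b i =
        ∑ k, ∑ k', X i k * X i k' * a k * b k' := by
      intro i
      simp only [Matrix.mulVec, dotProduct]
      rw [Finset.sum_mul_sum]
      exact Finset.sum_congr rfl fun k _ => Finset.sum_congr rfl fun k' _ => by ring
    simp only [e1]
    rw [Finset.sum_comm]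
    simp only [Finset.sum_comm (s := (Finset.univ : Finset (Fin N)))]
    rw [Fintype.sum_sigma, Finset.sum_div]
    refine Finset.sum_congr rfl fun j _ => ?_
    simp only [Fintype.sum_sigma]
    rw [Finset.sum_comm, Finset.sum_div]
    refine Finset.sum_congr rfl fun j' _ => ?_
    rw [Finset.sum_div]
    refine Finset.sum_congr rfl fun t _ => ?_
    rw [Finset.sum_div]
    refine Finset.sum_congr rfl fun t' _ => ?_
    rw [psiEnt, ← Finset.sum_mul, ← Finset.sum_mul]
    ring
  have h2 : φ * ∑ k, a k * b k =
      ∑ j, ∑ j', if j = j' then φ * ∑ t, a ⟨j, t⟩ * b ⟨j, t⟩ else 0 := by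
    rw [Fintype.sum_sigma, Finset.mul_sum]
    simp
  rw [h1, h2, ← Finset.sum_sub_distrib, Finset.sum_mul_sum, Finset.mul_sum]
  refine (Finset.abs_sum_le_sum_abs _ _).trans (Finset.sum_le_sum fun j _ => ?_)
  rw [← Finset.sum_sub_distrib]
  exact (Finset.abs_sum_le_sum_abs _ _).trans
    ((Finset.sum_le_sum fun j' _ => h.block hη hKj a b j j').trans
      (le_of_eq (by rw [Finset.mul_sum])))

/-- Restricted eigenvalue bound on the cone `∑_{j ∉ J} ‖Δ^j‖ ≤ 3 R ∑_{j ∈ J} ‖Δ^j‖`, where `R`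
stands for `λ_max / λ_min`. The Gram form of the part outside `J` is nonnegative and is dropped;
the constant `14 = 2 + 12` adds the `J × J` error and the error of twice the `J × Jᶜ` term. -/
lemma Coherent.restricted_eigenvalue {X : Matrix (Fin N) (GIdx Kj) ℝ} {φ η : ℝ}
    (h : Coherent X φ η) (hη : 0 ≤ η) (hKj : ∀ j, 1 ≤ Kj j) (Δ : GIdx Kj → ℝ)
    (J : Finset (Fin M)) {s : ℝ} (hJ : (J.card : ℝ) ≤ s) {R : ℝ} (hR : 1 ≤ R)
    (hcone : ∑ j ∈ Jᶜ, gnorm Δ j ≤ 3 * R * ∑ j ∈ J, gnorm Δ j) :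
    (φ - 14 * η * R * s) * ∑ j ∈ J, gnorm Δ j ^ 2 ≤ (∑ i, X.mulVec Δ i ^ 2) / N := by
  set D := ∑ j ∈ J, gnorm Δ j with hD
  set Q := ∑ j ∈ J, gnorm Δ j ^ 2 with hQ
  have hD0 : 0 ≤ D := Finset.sum_nonneg fun j _ => gnorm_nonneg _ _
  have hQ0 : 0 ≤ Q := Finset.sum_nonneg fun j _ => sq_nonneg _
  have hDQ : D ^ 2 ≤ s * Q :=
    (sq_sum_le_card_mul_sum_sq (s := J) (f := fun j => gnorm Δ j)).trans
      (mul_le_mul_of_nonneg_right hJ hQ0)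
  have f1 := h.form hη hKj (restr J Δ) (restr J Δ)
  have f2 := h.form hη hKj (restr J Δ) (restr Jᶜ Δ)
  rw [sum_gnorm_restr, ← hD] at f1
  rw [sum_gnorm_restr, sum_gnorm_restr, ← hD] at f2
  have g1 : ∑ k, restr J Δ k * restr J Δ k = Q := by
    rw [Fintype.sum_sigma, hQ]
    have : ∀ j, ∑ t, restr J Δ ⟨j, t⟩ * restr J Δ ⟨j, t⟩ =
        if j ∈ J then gnorm Δ j ^ 2 else 0 := by
      intro j
      rw [gnorm_sq]
      by_cases hj : j ∈ J <;> simp [restr, hj, sq]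
    simp [this]
  have g2 : ∑ k, restr J Δ k * restr Jᶜ Δ k = 0 := by
    refine Finset.sum_eq_zero fun k _ => ?_
    by_cases hj : k.1 ∈ J <;> simp [restr, hj]
  rw [g1] at f1
  rw [g2, mul_zero, sub_zero] at f2
  have hexp : (∑ i, X.mulVec Δ i ^ 2) / N =
      (∑ i, X.mulVec (restr J Δ) i * X.mulVec (restr J Δ) i) / N +
      2 * ((∑ i, X.mulVec (restr J Δ) i * X.mulVec (restr Jᶜ Δ) i) / N) +
      (∑ i, X.mulVec (restr Jᶜ Δ) i ^ 2) / N := by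
    conv_lhs => rw [← restr_add_compl J Δ]
    rw [Matrix.mulVec_add, ← mul_div_assoc, ← add_div, ← add_div, Finset.mul_sum,
      ← Finset.sum_add_distrib, ← Finset.sum_add_distrib]
    congr 1
    refine Finset.sum_congr rfl fun i _ => ?_
    simp only [Pi.add_apply]
    ring
  have hnn : 0 ≤ (∑ i, X.mulVec (restr Jᶜ Δ) i ^ 2) / N := by positivity
  have h3 := (abs_le.1 f1).1
  have h4 := (abs_le.1 f2).1
  have h5 : 2 * η * (D * ∑ j ∈ Jᶜ, gnorm Δ j) ≤ 6 * η * R * D ^ 2 := by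
    have := mul_le_mul_of_nonneg_left hcone (mul_nonneg (mul_nonneg two_pos.le hη) hD0)
    nlinarith
  have h6 : 2 * η * (D * D) ≤ 2 * η * R * D ^ 2 := by
    have := mul_le_mul_of_nonneg_left hR (mul_nonneg (mul_nonneg two_pos.le hη) (sq_nonneg D))
    nlinarith
  have h7 : 14 * η * R * D ^ 2 ≤ 14 * η * R * (s * Q) :=
    mul_le_mul_of_nonneg_left hDQ (by positivity)
  rw [hexp]
  nlinarith

/-- Coherence turns a bound on the group correlations of `XΔ` into a bound on `‖Δ^j‖`: test the
Gram form against the restriction of `Δ` to group `j`. -/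
lemma Coherent.group_bound {X : Matrix (Fin N) (GIdx Kj) ℝ} {φ η : ℝ}
    (h : Coherent X φ η) (hη : 0 ≤ η) (hKj : ∀ j, 1 ≤ Kj j) (Δ : GIdx Kj → ℝ) (j : Fin M) :
    φ * gnorm Δ j ≤ gnorm (corr X (X.mulVec Δ)) j + 2 * η * ∑ j, gnorm Δ j := by
  have hS0 : 0 ≤ ∑ j, gnorm Δ j := Finset.sum_nonneg fun j _ => gnorm_nonneg _ _
  have f := h.form hη hKj (restr {j} Δ) Δ
  rw [sum_gnorm_restr, Finset.sum_singleton] at f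
  have hsum : ∀ c : GIdx Kj → ℝ, ∑ k, restr {j} Δ k * c k = ∑ t, Δ ⟨j, t⟩ * c ⟨j, t⟩ := by
    intro c
    rw [sum_group (j := j) fun k hk => by simp [restr, hk]]
    simp [restr]
  have h1 : (∑ i, X.mulVec (restr {j} Δ) i * X.mulVec Δ i) / N =
      ∑ t, Δ ⟨j, t⟩ * corr X (X.mulVec Δ) ⟨j, t⟩ := by
    rw [← hsum, ← sum_mul_mulVec]
    simp only [mul_comm]
  have h2 : ∑ k, restr {j} Δ k * Δ k = gnorm Δ j ^ 2 := by
    rw [hsum, gnorm_sq]; simp only [sq]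
  rw [h1, h2] at f
  have h3 := (abs_le.1 f).1
  have h4 := (le_abs_self _).trans (abs_group_inner_le Δ (corr X (X.mulVec Δ)) j)
  rcases (gnorm_nonneg Δ j).eq_or_lt with h0 | hpos
  · rw [← h0, mul_zero]
    exact add_nonneg (gnorm_nonneg _ _) (mul_nonneg (mul_nonneg two_pos.le hη) hS0)
  · refine le_of_mul_le_mul_left ?_ hpos
    nlinarith

/-! ### Estimation and pattern recovery -/

/-- The deterministic part: under coherence and group sparsity, when all noise correlations are at
most `λ_j / 2`, every Group Lasso solution is within `(c / φ) λ_max` of `βstar` in each group. -/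
lemma sup_norm_bound (hKj : ∀ j, 1 ≤ Kj j) {X : Matrix (Fin N) (GIdx Kj) ℝ}
    {βstar : GIdx Kj → ℝ} {w : Fin N → ℝ} {lam : Fin M → ℝ} {lm lM : ℝ} (hlm : 0 < lm)
    (hlmM : lm ≤ lM) (hl : ∀ j, lm ≤ lam j) (hL : ∀ j, lam j ≤ lM)
    {s α φ : ℝ} (hs : 0 < s) (hα : 1 < α) (hφ : 0 < φ)
    (hβs : ((Finset.univ.filter (fun j => gnorm βstar j ≠ 0)).card : ℝ) ≤ s)
    (hcoh : Coherent X φ (lm * φ / (14 * α * lM * s)))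
    (hw : ∀ j, gnorm (corr X w) j ≤ lam j / 2)
    {b : GIdx Kj → ℝ} (hb : IsGLSol X (fun i => X.mulVec βstar i + w i) lam b) (j : Fin M) :
    gnorm (b - βstar) j ≤ mcConst α / φ * lM := by
  have hlM : 0 < lM := hlm.trans_le hlmM
  have hα0 : 0 < α := by linarith
  have hlam : ∀ j, 0 < lam j := fun j => hlm.trans_le (hl j)
  set η := lm * φ / (14 * α * lM * s) with hη
  have hη0 : 0 ≤ η := by positivity
  set Δ := b - βstar with hΔ
  set J := Finset.univ.filter (fun j => gnorm βstar j ≠ 0) with hJ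
  have hbasic := basic_ineq hlam hw hb
  rw [← hΔ, ← hJ] at hbasic
  set P := (∑ i, X.mulVec Δ i ^ 2) / N with hP
  have hP0 : 0 ≤ P := by positivity
  set D := ∑ j ∈ J, gnorm Δ j with hD
  have hD0 : 0 ≤ D := Finset.sum_nonneg fun j _ => gnorm_nonneg _ _
  set T := ∑ j, gnorm Δ j with hT
  have hJle : ∑ j ∈ J, lam j * gnorm Δ j ≤ lM * D := by
    rw [hD, Finset.mul_sum]
    exact Finset.sum_le_sum fun j _ => mul_le_mul_of_nonneg_right (hL j) (gnorm_nonneg _ _)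
  have hTle : lm * T ≤ ∑ j, lam j * gnorm Δ j := by
    rw [hT, Finset.mul_sum]
    exact Finset.sum_le_sum fun j _ => mul_le_mul_of_nonneg_right (hl j) (gnorm_nonneg _ _)
  have hcone : ∑ j ∈ Jᶜ, gnorm Δ j ≤ 3 * (lM / lm) * D := by
    have h1 : lm * ∑ j ∈ Jᶜ, gnorm Δ j ≤ ∑ j ∈ Jᶜ, lam j * gnorm Δ j := by
      rw [Finset.mul_sum]
      exact Finset.sum_le_sum fun j _ => mul_le_mul_of_nonneg_right (hl j) (gnorm_nonneg _ _)
    have h2 := Finset.sum_add_sum_compl J fun j => lam j * gnorm Δ j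
    have h3 : lm * ∑ j ∈ Jᶜ, gnorm Δ j ≤ 3 * (lM * D) := by linarith
    have h4 : 3 * (lM / lm) * D = 3 * (lM * D) / lm := by ring
    rw [h4, le_div_iff₀ hlm]
    linarith
  have hre := hcoh.restricted_eigenvalue hη0 hKj Δ J hβs ((one_le_div hlm).2 hlmM) hcone
  -- `η` is calibrated so that the restricted eigenvalue is `κ = φ (1 - 1 / α) > 0`.
  have hκ : φ - 14 * η * (lM / lm) * s = φ * (α - 1) / α := by
    rw [hη]; field_simp
  set κ := φ * (α - 1) / α with hκdef
  have hκ0 : 0 < κ := div_pos (mul_pos hφ (by linarith)) hα0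
  rw [hκ, ← hP] at hre
  set Q := ∑ j ∈ J, gnorm Δ j ^ 2 with hQ
  have hQ0 : 0 ≤ Q := Finset.sum_nonneg fun j _ => sq_nonneg _
  have hDQ : D ^ 2 ≤ s * Q :=
    (sq_sum_le_card_mul_sum_sq (s := J) (f := fun j => gnorm Δ j)).trans
      (mul_le_mul_of_nonneg_right hβs hQ0)
  have hT0 : 0 ≤ T := Finset.sum_nonneg fun j _ => gnorm_nonneg _ _
  have hlT : lm * T ≤ 4 * (lM * D) := by linarith
  have hκQ : κ * Q ≤ 4 * (lM * D) := by
    have : 0 ≤ lm * T := mul_nonneg hlm.le hT0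
    linarith
  have hκD : κ * D ≤ 4 * s * lM := by
    rcases hD0.eq_or_lt with h0 | hpos
    · rw [← h0, mul_zero]; positivity
    · refine le_of_mul_le_mul_left ?_ hpos
      have h1 := mul_le_mul_of_nonneg_left hDQ hκ0.le
      have h2 := mul_le_mul_of_nonneg_left hκQ hs.le
      nlinarith
  -- This is the second summand of `mcConst`; the `3 / 2` comes from the optimality conditions.
  have hηT : 2 * η * T ≤ 16 / (7 * (α - 1)) * lM := by
    have h1 : κ * (lm * T) ≤ 16 * s * lM ^ 2 := by
      have h2 := mul_le_mul_of_nonneg_left hlT hκ0.le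
      have h3 := mul_le_mul_of_nonneg_left hκD hlM.le
      nlinarith
    have hα1 : 0 < α - 1 := by linarith
    have h4 : 2 * η * T = κ * (lm * T) / (7 * (α - 1) * lM * s) := by
      rw [hη, hκdef]; field_simp; ring
    rw [h4, div_le_iff₀ (by positivity)]
    refine h1.trans (le_of_eq ?_)
    field_simp
  have hcorr : gnorm (corr X (X.mulVec Δ)) j ≤ 3 / 2 * lam j := by
    have h1 := kkt hlam hb j
    have h2 : X.mulVec Δ = (X.mulVec b - fun i => X.mulVec βstar i + w i) + w := by
      rw [hΔ, Matrix.mulVec_sub]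
      ext i
      simp only [Pi.add_apply, Pi.sub_apply]
      ring
    rw [h2, corr_add]
    refine (gnorm_add_le _ _ j).trans ?_
    linarith [hw j]
  have hfin := hcoh.group_bound hη0 hKj Δ j
  rw [← hT] at hfin
  rw [div_mul_eq_mul_div, le_div_iff₀ hφ, mcConst, add_mul]
  linarith [hL j]

end Aux

/-- under `M(β*) ≤ s` and the coherence assumption MC(s,α), with probability at
least `1 − 2M^{1−q}`, every Group Lasso solution `β̂` satisfies
`‖β̂ − β*‖_{2,∞} ≤ (c/φ)·λ_max`; moreover, if all nonzero groups of `β*` have norm larger than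
`(2c/φ)·λ_max`, then the thresholded set `Ĵ = {j : ‖β̂^j‖ > (c/φ)λ_max}` equals `J(β*)`. -/
theorem group_lasso_sup_norm_and_pattern_selection
    {N M : ℕ} {Kj : Fin M → ℕ} (hM : 2 ≤ M) (hN : 1 ≤ N) (hKj : ∀ j, 1 ≤ Kj j)
    (X : Matrix (Fin N) (GIdx Kj) ℝ) (βstar : GIdx Kj → ℝ)
    {Ω : Type*} [MeasurableSpace Ω] (μ : Measure Ω) [IsProbabilityMeasure μ]
    (W : Ω → Fin N → ℝ) (σ : ℝ) (hσ : 0 < σ)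
    (hW : Measure.map W μ = Measure.pi fun _ : Fin N => gaussianReal 0 (σ ^ 2).toNNReal)
    (q : ℝ) (hq : 1 < q) (lam : Fin M → ℝ) (hlam_pos : ∀ j, 0 < lam j)
    (hlam : ∀ j, 2 * σ / Real.sqrt N *
      Real.sqrt (trPsi X j + 2 * specPsi X j *
        (2 * q * Real.log M + Real.sqrt (Kj j * q * Real.log M))) ≤ lam j)
    (s : ℕ) (hs : 1 ≤ s)
    (hβs : (Finset.univ.filter (fun j => gnorm βstar j ≠ 0)).card ≤ s)
    (α φ : ℝ) (hα : 1 < α) (hφ : 0 < φ)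
    (hMCdiag : ∀ j t, psiEnt X j j t t = φ)
    (hMCoff : ∀ j, ∀ t t' : Fin (Kj j), (t : ℕ) ≠ (t' : ℕ) →
      |psiEnt X j j t t'| ≤
        sInf (Set.range lam) * φ / (14 * α * sSup (Set.range lam) * s * Kj j))
    (hMCdiag' : ∀ j j', j ≠ j' → ∀ (t : Fin (Kj j)) (t' : Fin (Kj j')), (t : ℕ) = (t' : ℕ) →
      |psiEnt X j j' t t'| ≤ sInf (Set.range lam) * φ / (14 * α * sSup (Set.range lam) * s))
    (hMCoff' : ∀ j j', j ≠ j' → ∀ (t : Fin (Kj j)) (t' : Fin (Kj j')), (t : ℕ) ≠ (t' : ℕ) →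
      |psiEnt X j j' t t'| ≤ sInf (Set.range lam) * φ /
        (14 * α * sSup (Set.range lam) * s * Real.sqrt (Kj j * Kj j'))) :
    ∃ A : Set Ω, MeasurableSet A ∧ 1 - 2 * (M : ℝ) ^ ((1 : ℝ) - q) ≤ (μ A).toReal ∧
      ∀ ω ∈ A, ∀ b : GIdx Kj → ℝ,
        IsGLSol X (fun i => X.mulVec βstar i + W ω i) lam b →
        (⨆ j, gnorm (b - βstar) j) ≤ mcConst α / φ * sSup (Set.range lam) ∧
        ((∀ j, gnorm βstar j ≠ 0 →
            2 * mcConst α / φ * sSup (Set.range lam) < gnorm βstar j) →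
          Finset.univ.filter (fun j => mcConst α / φ * sSup (Set.range lam) < gnorm b j) =
            Finset.univ.filter (fun j => gnorm βstar j ≠ 0)) := by
  have : Nonempty (Fin M) := ⟨⟨0, by omega⟩⟩
  have hNpos : (0 : ℝ) < N := by exact_mod_cast hN
  -- The diagonal condition puts `φ` among the values of the quadratic form of `Ψ_j`.
  have hspec : ∀ j, 0 < specPsi X j := by
    intro j
    have h1 := quad_le_specPsi hN X j (Pi.single ⟨0, hKj j⟩ 1)
    have h2 := hMCdiag j ⟨0, hKj j⟩
    rw [psiEnt, div_eq_iff hNpos.ne'] at h2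
    simp only [Pi.single_apply, mul_ite, mul_one, mul_zero, Finset.sum_ite_eq', Finset.mem_univ,
      if_true, ite_pow, one_pow, ne_eq, OfNat.ofNat_ne_zero, not_false_eq_true, zero_pow] at h1
    simp only [sq] at h1
    rw [h2] at h1
    have : φ ≤ specPsi X j := by
      refine le_of_mul_le_mul_left ?_ hNpos
      linarith
    linarith
  obtain ⟨A, hAm, hAp, hA⟩ := noise_event hM hN hKj X μ W hσ hW hq lam hspec hlam
  have hfin : (Set.range lam).Finite := Set.finite_range lam
  have hl : ∀ j, sInf (Set.range lam) ≤ lam j := fun j =>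
    csInf_le hfin.bddBelow (Set.mem_range_self j)
  have hL : ∀ j, lam j ≤ sSup (Set.range lam) := fun j =>
    le_csSup hfin.bddAbove (Set.mem_range_self j)
  have hlm : 0 < sInf (Set.range lam) := by
    obtain ⟨j, hj⟩ := (Set.range_nonempty lam).csInf_mem hfin
    rw [← hj]; exact hlam_pos j
  have hcoh : Coherent X φ (sInf (Set.range lam) * φ / (14 * α * sSup (Set.range lam) * s)) :=
    ⟨hMCdiag, fun j t t' h => by rw [div_div]; exact hMCoff j t t' h, hMCdiag',
      fun j j' hj t t' h => by rw [div_div]; exact hMCoff' j j' hj t t' h⟩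
  refine ⟨A, hAm, hAp, fun ω hω b hb => ?_⟩
  have hbound : ∀ j, gnorm (b - βstar) j ≤ mcConst α / φ * sSup (Set.range lam) := fun j =>
    sup_norm_bound hKj hlm ((hl j).trans (hL j)) hl hL (by exact_mod_cast hs) hα hφ
      (by exact_mod_cast hβs) hcoh (fun j => by rw [gnorm_corr]; exact hA ω hω j) hb j
  refine ⟨ciSup_le hbound, fun hsep => ?_⟩
  ext j
  simp only [Finset.mem_filter, Finset.mem_univ, true_and]
  have h1 := hbound j
  constructor
  · intro hbig h0
    have h2 := gnorm_add_le (b - βstar) βstar j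
    rw [sub_add_cancel, h0] at h2
    linarith
  · intro h0
    have h2 := hsep j h0
    have h3 := gnorm_add_le b (-(b - βstar)) j
    rw [gnorm_neg, show b + -(b - βstar) = βstar by abel] at h3
    have h4 : 2 * mcConst α / φ * sSup (Set.range lam) =
        2 * (mcConst α / φ * sSup (Set.range lam)) := by ring
    linarith

end GroupLasso
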